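/- Let s and e be composable labelled transition systems. Then s eco e if and only if s mutually accepts e. -/

import Mathlib

/-- Labels extended with the quiescence label `δ`. -/
inductive ELabel (Lab : Type) : Type
  | lab : Lab → ELabel Lab
  | delta : ELabel Lab

namespace ELabel

/-- Membership of an extended label in `𝓛^δ = 𝓛 ∪ {δ}`. -/
def inL {Lab : Type} (Ls : Set Lab) : ELabel Lab → Prop
  | lab ℓ => ℓ ∈ Ls
  | delta => True

end ELabel

/-- A trace lies in `(𝓛^δ)*`. -/
def TraceIn {Lab : Type} (Ls : Set Lab) (σ : List (ELabel Lab)) : Prop :=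
  ∀ x ∈ σ, ELabel.inL Ls x

/-- A labelled transition system.  `T q none q'` is an internal `τ`-step,
`T q (some ℓ) q'` is a step labelled `ℓ`. -/
structure LTS (Q : Type) (Lab : Type) where
  I : Set Lab
  U : Set Lab
  T : Q → Option Lab → Q → Prop
  q0 : Q

namespace LTS

variable {Q Lab : Type}

/-- The label set `L = I ∪ U`. -/
def L (M : LTS Q Lab) : Set Lab := M.I ∪ M.U

/-- Standing assumptions on all LTSs: countable, disjoint input/output label
sets, transitions labelled within `L`, strong convergence (no infinite
`τ`-sequences), and image-finiteness. -/
def WellFormed (M : LTS Q Lab) : Prop :=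
  M.I.Countable ∧ M.U.Countable ∧ Disjoint M.I M.U ∧
  (∀ q ℓ q', M.T q (some ℓ) q' → ℓ ∈ M.L) ∧
  (¬ ∃ f : ℕ → Q, ∀ n, M.T (f n) none (f (n + 1))) ∧
  (∀ q a, {q' | M.T q a q'}.Finite)

/-- A state is quiescent if neither an output nor `τ` is enabled in it. -/
def Quiescent (M : LTS Q Lab) (q : Q) : Prop :=
  (∀ x ∈ M.U, ∀ q', ¬ M.T q (some x) q') ∧ ∀ q', ¬ M.T q none q'

/-- A single visible step `q --x--> q'` for `x ∈ L^δ`, where the quiescence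
label `δ` gives a self-loop at quiescent states. -/
def VStep (M : LTS Q Lab) (q : Q) : ELabel Lab → Q → Prop
  | .lab ℓ, q' => M.T q (some ℓ) q'
  | .delta, q' => q' = q ∧ M.Quiescent q

/-- Zero or more `τ`-steps: `q ==ε==> q'`. -/
def Eps (M : LTS Q Lab) : Q → Q → Prop :=
  Relation.ReflTransGen fun a b => M.T a none b

/-- Weak transition `q ==σ==> q'` for `σ ∈ (L^δ)*`. -/
inductive W (M : LTS Q Lab) : Q → List (ELabel Lab) → Q → Prop
  | nil {q q' : Q} : M.Eps q q' → W M q [] q'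
  | snoc {q q1 q2 q' : Q} {σ : List (ELabel Lab)} {x : ELabel Lab} :
      W M q σ q1 → M.VStep q1 x q2 → M.Eps q2 q' → W M q (σ ++ [x]) q'

/-- `X after σ`, for a set of states `X`. -/
def afterSet (M : LTS Q Lab) (X : Set Q) (σ : List (ELabel Lab)) : Set Q :=
  {q' | ∃ q ∈ X, M.W q σ q'}

/-- `M after σ`, from the initial state. -/
def after (M : LTS Q Lab) (σ : List (ELabel Lab)) : Set Q :=
  {q' | M.W M.q0 σ q'}

/-- The predicate underlying `out(q) ⊆ U ∪ {δ}`. -/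
def outLabel (M : LTS Q Lab) (q : Q) : ELabel Lab → Prop
  | .lab ℓ => ℓ ∈ M.U ∧ ∃ q', M.T q (some ℓ) q'
  | .delta => M.Quiescent q

/-- `out(q)`. -/
def outq (M : LTS Q Lab) (q : Q) : Set (ELabel Lab) :=
  {x | M.outLabel q x}

/-- `in(q) = {ℓ ∈ I | q ==ℓ==>}`. -/
def inq (M : LTS Q Lab) (q : Q) : Set Lab :=
  {ℓ | ℓ ∈ M.I ∧ ∃ q', M.W q [ELabel.lab ℓ] q'}

/-- `out(X) = ⋃_{q ∈ X} out(q)`. -/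
def outSet (M : LTS Q Lab) (X : Set Q) : Set (ELabel Lab) :=
  ⋃ q ∈ X, M.outq q

/-- `in(X) = ⋂_{q ∈ X} in(q)`. -/
def inSet (M : LTS Q Lab) (X : Set Q) : Set Lab :=
  ⋂ q ∈ X, M.inq q

/-- Input-enabledness: `M` is an IOTS. -/
def InputEnabled (M : LTS Q Lab) : Prop :=
  ∀ q, ∀ ℓ ∈ M.I, ∃ q', M.W q [ELabel.lab ℓ] q'

/-- `Utraces(M)`. -/
def Utraces (M : LTS Q Lab) : Set (List (ELabel Lab)) :=
  {σ | TraceIn M.L σ ∧ (∃ q', M.W M.q0 σ q') ∧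
    ∀ σ1 ℓ σ2, σ = σ1 ++ ELabel.lab ℓ :: σ2 → ℓ ∈ M.I →
      ∀ q, M.W M.q0 σ1 q → ∃ q', M.W q [ELabel.lab ℓ] q'}

/-- An LTS is utrace-closed when every trace over `(L^δ)*` that it can
perform is a utrace. -/
def UtraceClosed (M : LTS Q Lab) : Prop :=
  ∀ σ : List (ELabel Lab), TraceIn M.L σ → (∃ q', M.W M.q0 σ q') → σ ∈ M.Utraces

end LTS

/-- `i uioco s`. -/
def Uioco {Qi Qs Lab : Type} (i : LTS Qi Lab) (s : LTS Qs Lab) : Prop :=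
  ∀ σ ∈ s.Utraces, i.outSet (i.after σ) ⊆ s.outSet (s.after σ)

/-- Composability: disjoint output label sets. -/
def Composable {Qs Qe Lab : Type} (s : LTS Qs Lab) (e : LTS Qe Lab) : Prop :=
  s.U ∩ e.U = ∅

/-- Parallel composition `s ∥ e`. -/
def par {Qs Qe Lab : Type} (s : LTS Qs Lab) (e : LTS Qe Lab) : LTS (Qs × Qe) Lab where
  I := (s.I \ e.U) ∪ (e.I \ s.U)
  U := s.U ∪ e.U
  T := fun p a p' =>
    match a with
    | none =>
        (s.T p.1 none p'.1 ∧ p'.2 = p.2) ∨ (e.T p.2 none p'.2 ∧ p'.1 = p.1)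
    | some ℓ =>
        (ℓ ∈ s.L ∧ ℓ ∉ e.L ∧ s.T p.1 (some ℓ) p'.1 ∧ p'.2 = p.2) ∨
        (ℓ ∈ e.L ∧ ℓ ∉ s.L ∧ e.T p.2 (some ℓ) p'.2 ∧ p'.1 = p.1) ∨
        (ℓ ∈ s.L ∧ ℓ ∈ e.L ∧ s.T p.1 (some ℓ) p'.1 ∧ e.T p.2 (some ℓ) p'.2)
  q0 := (s.q0, e.q0)

/-- `s accepts e`: along utraces of `s ∥ e`, every output of `e` that is an
input of `s` is (weakly) enabled in `s`. -/
def Accepts {Qs Qe Lab : Type} (s : LTS Qs Lab) (e : LTS Qe Lab) : Prop :=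
  ∀ σ ∈ (par s e).Utraces, ∀ qs qe, (par s e).W (par s e).q0 σ (qs, qe) →
    ∀ ℓ, ELabel.lab ℓ ∈ e.outq qe → ℓ ∈ s.I → ℓ ∈ s.inq qs

/-- `s mutually accepts e`. -/
def MutuallyAccepts {Qs Qe Lab : Type} (s : LTS Qs Lab) (e : LTS Qe Lab) : Prop :=
  Accepts s e ∧ Accepts e s

/-- `R` is an ecosim for `s` and `e`. -/
def IsEcosim {Qs Qe Lab : Type} (s : LTS Qs Lab) (e : LTS Qe Lab)
    (R : Set (Set Qs × Set Qe)) : Prop :=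
  (s.after [], e.after []) ∈ R ∧
  ∀ Xs Xe, (Xs, Xe) ∈ R →
    (∀ ℓ, ELabel.lab ℓ ∈ e.outSet Xe → ℓ ∈ s.I →
      ℓ ∈ s.inSet Xs ∧
        (s.afterSet Xs [ELabel.lab ℓ], e.afterSet Xe [ELabel.lab ℓ]) ∈ R) ∧
    (∀ ℓ, ELabel.lab ℓ ∈ s.outSet Xs → ℓ ∈ e.I →
      ℓ ∈ e.inSet Xe ∧
        (s.afterSet Xs [ELabel.lab ℓ], e.afterSet Xe [ELabel.lab ℓ]) ∈ R) ∧
    (∀ ℓ, (ELabel.lab ℓ ∈ e.outSet Xe ∨ ℓ ∈ e.inSet Xe) → ℓ ∉ s.L →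
      (Xs, e.afterSet Xe [ELabel.lab ℓ]) ∈ R) ∧
    (∀ ℓ, (ELabel.lab ℓ ∈ s.outSet Xs ∨ ℓ ∈ s.inSet Xs) → ℓ ∉ e.L →
      (s.afterSet Xs [ELabel.lab ℓ], Xe) ∈ R) ∧
    (∀ ℓ, ℓ ∈ s.inSet Xs → ℓ ∈ e.inSet Xe →
      (s.afterSet Xs [ELabel.lab ℓ], e.afterSet Xe [ELabel.lab ℓ]) ∈ R) ∧
    (ELabel.delta ∈ s.outSet Xs → ELabel.delta ∈ e.outSet Xe →
      (s.afterSet Xs [ELabel.delta], e.afterSet Xe [ELabel.delta]) ∈ R)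

/-- `s eco e`: there exists an ecosim for `s` and `e`. -/
def Eco {Qs Qe Lab : Type} (s : LTS Qs Lab) (e : LTS Qe Lab) : Prop :=
  ∃ R, IsEcosim s e R

/-- `R_U(s,e)`: the smallest relation closed under the given rules. -/
inductive RU {Qs Qe Lab : Type} (s : LTS Qs Lab) (e : LTS Qe Lab) :
    Set Qs → Set Qe → Prop
  | base : RU s e (s.after []) (e.after [])
  | syncOutE {Xs : Set Qs} {Xe : Set Qe} (ℓ : Lab) :
      RU s e Xs Xe → ELabel.lab ℓ ∈ e.outSet Xe → ℓ ∈ s.I →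
      RU s e (s.afterSet Xs [ELabel.lab ℓ]) (e.afterSet Xe [ELabel.lab ℓ])
  | syncOutS {Xs : Set Qs} {Xe : Set Qe} (ℓ : Lab) :
      RU s e Xs Xe → ELabel.lab ℓ ∈ s.outSet Xs → ℓ ∈ e.I →
      RU s e (s.afterSet Xs [ELabel.lab ℓ]) (e.afterSet Xe [ELabel.lab ℓ])
  | internalE {Xs : Set Qs} {Xe : Set Qe} (ℓ : Lab) :
      RU s e Xs Xe → (ELabel.lab ℓ ∈ e.outSet Xe ∨ ℓ ∈ e.inSet Xe) → ℓ ∉ s.L →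
      RU s e Xs (e.afterSet Xe [ELabel.lab ℓ])
  | internalS {Xs : Set Qs} {Xe : Set Qe} (ℓ : Lab) :
      RU s e Xs Xe → (ELabel.lab ℓ ∈ s.outSet Xs ∨ ℓ ∈ s.inSet Xs) → ℓ ∉ e.L →
      RU s e (s.afterSet Xs [ELabel.lab ℓ]) Xe
  | syncIn {Xs : Set Qs} {Xe : Set Qe} (ℓ : Lab) :
      RU s e Xs Xe → ℓ ∈ s.inSet Xs → ℓ ∈ e.inSet Xe →
      RU s e (s.afterSet Xs [ELabel.lab ℓ]) (e.afterSet Xe [ELabel.lab ℓ])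
  | qdelta {Xs : Set Qs} {Xe : Set Qe} :
      RU s e Xs Xe → ELabel.delta ∈ s.outSet Xs → ELabel.delta ∈ e.outSet Xe →
      RU s e (s.afterSet Xs [ELabel.delta]) (e.afterSet Xe [ELabel.delta])

open Classical in
/-- Projection `σ↾𝓛^δ` of a trace onto an (extended) label set: keeps `δ`
and the labels in `Ls`, removes all other labels. -/
noncomputable def projD {Lab : Type} (σ : List (ELabel Lab)) (Ls : Set Lab) :
    List (ELabel Lab) :=
  σ.filter fun x => decide (ELabel.inL Ls x)

open Classical in
/-- Projection `σ↾𝓛` of a trace of plain labels onto a label set. -/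
noncomputable def projL {Lab : Type} (σ : List Lab) (Ls : Set Lab) : List Lab :=
  σ.filter fun ℓ => decide (ℓ ∈ Ls)

open Classical in
/-- Substitution `σ[θ/δ]` of the label `θ` by the quiescence label `δ`. -/
noncomputable def substTheta {Lab : Type} (θ : Lab) (σ : List Lab) :
    List (ELabel Lab) :=
  σ.map fun ℓ => if ℓ = θ then ELabel.delta else ELabel.lab ℓ

/-- `⟨X⟩`: componentwise collection of a set of pairs of states. -/
def collect {Qs Qe : Type} (X : Set (Qs × Qe)) : Set Qs × Set Qe :=
  (Prod.fst '' X, Prod.snd '' X)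

/-- `q_s accepts q_e over σ`. -/
def AcceptsOver {Qs Qe Lab : Type} (s : LTS Qs Lab) (e : LTS Qe Lab)
    (qs : Qs) (qe : Qe) (σ : List (ELabel Lab)) : Prop :=
  ∀ σ1 σ2 : List (ELabel Lab), σ1 ++ σ2 = σ →
    ∀ (qs' : Qs) (qe' : Qe), (par s e).W (qs, qe) σ1 (qs', qe') →
      ∀ ℓ, ELabel.lab ℓ ∈ e.outq qe' → ℓ ∈ s.I → ℓ ∈ s.inq qs' ∧ ℓ ∈ e.U

/-- `q_s mutually accepts q_e over σ`. -/
def MutuallyAcceptsOver {Qs Qe Lab : Type} (s : LTS Qs Lab) (e : LTS Qe Lab)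
    (qs : Qs) (qe : Qe) (σ : List (ELabel Lab)) : Prop :=
  AcceptsOver s e qs qe σ ∧ AcceptsOver e s qe qs σ

/-- A test case: a quasi-finite tree-shaped LTS without `τ`-transitions, with
terminal states `pass` and `fail` carrying input self-loops, a special
quiescence-observation input `θ`, at most one output transition per state,
and receptive to all inputs other than `θ`. -/
structure TestCase (Qt Lab : Type) extends LTS Qt Lab where
  passS : Qt
  failS : Qt
  theta : Lab
  theta_input : theta ∈ I
  no_tau : ∀ q q', ¬ T q none q'
  tree : ∀ q, q ≠ q0 → q ≠ passS → q ≠ failS →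
    ∃! p : Qt × Option Lab, T p.1 p.2 q
  pass_loops : ∀ ℓ ∈ I, T passS (some ℓ) passS
  pass_terminal : ∀ a q', T passS a q' → q' = passS ∧ ∃ ℓ ∈ I, a = some ℓ
  fail_loops : ∀ ℓ ∈ I, T failS (some ℓ) failS
  fail_terminal : ∀ a q', T failS a q' → q' = failS ∧ ∃ ℓ ∈ I, a = some ℓ
  one_output : ∀ q ℓ ℓ' q' q'', ℓ ∈ U → ℓ' ∈ U →
    T q (some ℓ) q' → T q (some ℓ') q'' → ℓ = ℓ' ∧ q' = q''
  receptive : ∀ q, ∀ ℓ ∈ I, ℓ ≠ theta → ∃ q', T q (some ℓ) q'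

/-- Test execution `t ⫿ i` of a test case `t` with an implementation `i`. -/
def testExec {Qt Qi Lab : Type} (t : TestCase Qt Lab) (i : LTS Qi Lab) :
    LTS (Qt × Qi) Lab where
  I := ∅
  U := i.U ∪ (t.toLTS.L \ {t.theta})
  T := fun p a p' =>
    match a with
    | none => i.T p.2 none p'.2 ∧ p'.1 = p.1
    | some ℓ =>
        (ℓ ∈ i.L ∧ ℓ ∉ t.toLTS.L ∧ i.T p.2 (some ℓ) p'.2 ∧ p'.1 = p.1) ∨
        (ℓ ∈ t.toLTS.L ∧ ℓ ∉ i.L ∧ ℓ ≠ t.theta ∧ t.T p.1 (some ℓ) p'.1 ∧ p'.2 = p.2) ∨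
        (ℓ ∈ i.L ∧ ℓ ∈ t.toLTS.L ∧ t.T p.1 (some ℓ) p'.1 ∧ i.T p.2 (some ℓ) p'.2) ∨
        (ℓ = t.theta ∧ t.T p.1 (some ℓ) p'.1 ∧ p'.2 = p.2 ∧ i.Quiescent p.2)
  q0 := (t.q0, i.q0)

/-!
Along a utrace `σ` of `s ∥ e` the reachable states form a rectangle,
`(s ∥ e) after σ = (s after σ↾L_s) × (e after σ↾L_e)`. For ordinary labels this is how parallel
composition works; for `δ` it needs mutual acceptance, since otherwise an output refused by the
other component could make a pair of states quiescent although one component is not. On such a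
rectangle `X × Y`, a label extends the utrace exactly if every component whose alphabet contains it
has it in `out ∪ in` of its side of the rectangle, which is also what the rules (a)–(f) of an
ecosim ask for. So any ecosim contains all rectangles reached by utraces, and under mutual
acceptance these rectangles form an ecosim.
-/

section projD

variable {Lab : Type} {Ls : Set Lab} {σ : List (ELabel Lab)} {x : ELabel Lab}

theorem projD_append_singleton_of_inL (h : ELabel.inL Ls x) :
    projD (σ ++ [x]) Ls = projD σ Ls ++ [x] := by
  simp [projD, List.filter_append, h]

theorem projD_append_singleton_of_not_inL (h : ¬ ELabel.inL Ls x) :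
    projD (σ ++ [x]) Ls = projD σ Ls := by
  simp [projD, List.filter_append, h]

end projD

namespace LTS

variable {Q Q' Lab : Type} {M : LTS Q Lab} {q q₁ q₂ : Q} {X : Set Q}
  {σ : List (ELabel Lab)} {x : ELabel Lab} {ℓ : Lab}

theorem W_nil_iff : M.W q [] q₁ ↔ M.Eps q q₁ := by
  constructor
  · intro h
    generalize hρ : ([] : List (ELabel Lab)) = ρ at h
    cases h with
    | nil h => exact h
    | snoc => simp at hρ
  · exact .nil

theorem W_append_singleton_iff :
    M.W q (σ ++ [x]) q₁ ↔ ∃ r r', M.W q σ r ∧ M.VStep r x r' ∧ M.Eps r' q₁ := by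
  constructor
  · intro h
    generalize hρ : σ ++ [x] = ρ at h
    cases h with
    | nil => simp at hρ
    | snoc hσ hx hε =>
      obtain ⟨rfl, hxx⟩ := List.append_inj' hρ rfl
      obtain rfl := List.singleton_inj.1 hxx
      exact ⟨_, _, hσ, hx, hε⟩
  · rintro ⟨r, r', hσ, hx, hε⟩
    exact .snoc hσ hx hε

theorem W_singleton_iff :
    M.W q [x] q₁ ↔ ∃ r r', M.Eps q r ∧ M.VStep r x r' ∧ M.Eps r' q₁ := by
  simpa only [W_nil_iff, List.nil_append] using
    W_append_singleton_iff (M := M) (q := q) (σ := []) (x := x)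

theorem W.trans_eps (h : M.W q σ q₁) (hε : M.Eps q₁ q₂) : M.W q σ q₂ := by
  cases h with
  | nil h => exact .nil (h.trans hε)
  | snoc hσ hx h => exact .snoc hσ hx (h.trans hε)

theorem after_append_singleton : M.after (σ ++ [x]) = M.afterSet (M.after σ) [x] := by
  ext q'
  simp only [after, afterSet, Set.mem_ofPred_eq, W_append_singleton_iff, W_singleton_iff]
  constructor
  · rintro ⟨r, r', hσ, hx, hε⟩
    exact ⟨r, hσ, r, r', .refl, hx, hε⟩
  · rintro ⟨q, hσ, r, r', hqr, hx, hε⟩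
    exact ⟨r, r', hσ.trans_eps hqr, hx, hε⟩

theorem mem_outSet : x ∈ M.outSet X ↔ ∃ q ∈ X, x ∈ M.outq q := by
  simp [outSet]

theorem mem_inSet : ℓ ∈ M.inSet X ↔ ∀ q ∈ X, ℓ ∈ M.inq q := by
  simp [inSet]

theorem mem_U_of_mem_outSet (h : .lab ℓ ∈ M.outSet X) : ℓ ∈ M.U := by
  obtain ⟨q, -, hU, -⟩ := mem_outSet.1 h
  exact hU

theorem mem_I_of_mem_inSet (hX : X.Nonempty) (h : ℓ ∈ M.inSet X) : ℓ ∈ M.I := by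
  obtain ⟨q, hq⟩ := hX
  exact (mem_inSet.1 h q hq).1

theorem nil_mem_Utraces : [] ∈ M.Utraces :=
  ⟨by simp [TraceIn], ⟨M.q0, .nil .refl⟩, by simp⟩

theorem append_singleton_mem_Utraces_iff :
    σ ++ [x] ∈ M.Utraces ↔ σ ∈ M.Utraces ∧ ELabel.inL M.L x ∧ (M.after (σ ++ [x])).Nonempty ∧
      ∀ ℓ ∈ M.I, x = .lab ℓ → ∀ q ∈ M.after σ, ∃ q', M.W q [.lab ℓ] q' := by
  constructor
  · rintro ⟨hL, ⟨q', hq'⟩, hin⟩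
    obtain ⟨r, -, hr, -⟩ := W_append_singleton_iff.1 hq'
    refine ⟨⟨fun y hy => hL y (by simp [hy]), ⟨r, hr⟩, fun σ₁ ℓ σ₂ h => ?_⟩,
      hL x (by simp), ⟨q', hq'⟩, ?_⟩
    · exact hin σ₁ ℓ (σ₂ ++ [x]) (by simp [h])
    · rintro ℓ hℓ rfl
      exact hin σ ℓ [] rfl hℓ
  · rintro ⟨⟨hL, -, hin⟩, hxL, hne, hx⟩
    refine ⟨fun y hy => ?_, hne, fun σ₁ ℓ σ₂ h hℓ => ?_⟩
    · rcases List.mem_append.1 hy with hy | hy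
      · exact hL y hy
      · exact List.mem_singleton.1 hy ▸ hxL
    · rcases List.eq_nil_or_concat σ₂ with rfl | ⟨σ₃, y, rfl⟩
      · obtain ⟨rfl, hxℓ⟩ := List.append_inj' h rfl
        exact hx ℓ hℓ (List.singleton_inj.1 hxℓ)
      · have hsplit : σ ++ [x] = (σ₁ ++ .lab ℓ :: σ₃) ++ [y] := by simpa using h
        exact hin σ₁ ℓ σ₃ (List.append_inj' hsplit rfl).1 hℓ

/-- The set `out(X) ∪ in(X)` of extended labels that the set of states `X` offers. As `in(X)` is an
intersection, it contains an input only if all states of `X` (weakly) enable it. -/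
def offered (M : LTS Q Lab) (X : Set Q) : Set (ELabel Lab) :=
  M.outSet X ∪ ELabel.lab '' M.inSet X

theorem delta_mem_offered : .delta ∈ M.offered X ↔ .delta ∈ M.outSet X := by
  simp [offered]

theorem lab_mem_offered : .lab ℓ ∈ M.offered X ↔ .lab ℓ ∈ M.outSet X ∨ ℓ ∈ M.inSet X := by
  simp [offered]

theorem inL_of_mem_offered (hX : X.Nonempty) (h : x ∈ M.offered X) : ELabel.inL M.L x := by
  rcases h with h | ⟨ℓ, h, rfl⟩
  · cases x with
    | delta => trivial
    | lab ℓ => exact .inr (mem_U_of_mem_outSet h)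
  · exact .inl (mem_I_of_mem_inSet hX h)

theorem after_append_singleton_nonempty_of_mem_offered (hne : (M.after σ).Nonempty)
    (h : x ∈ M.offered (M.after σ)) : (M.after (σ ++ [x])).Nonempty := by
  rcases h with h | ⟨ℓ, h, rfl⟩
  · obtain ⟨q, hq, hx⟩ := mem_outSet.1 h
    cases x with
    | delta => exact ⟨q, .snoc hq ⟨rfl, hx⟩ .refl⟩
    | lab ℓ =>
      obtain ⟨-, q', hx⟩ := hx
      exact ⟨q', .snoc hq hx .refl⟩
  · obtain ⟨q, hq⟩ := hne
    obtain ⟨-, q', hq'⟩ := mem_inSet.1 h q hq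
    rw [after_append_singleton]
    exact ⟨q', q, hq, hq'⟩

theorem delta_mem_outSet_of_nonempty (h : (M.after (σ ++ [.delta])).Nonempty) :
    .delta ∈ M.outSet (M.after σ) := by
  obtain ⟨q', hq'⟩ := h
  obtain ⟨r, -, hr, ⟨-, hquiet⟩, -⟩ := W_append_singleton_iff.1 hq'
  exact mem_outSet.2 ⟨r, hr, hquiet⟩

theorem lab_mem_outSet_of_nonempty (hU : ℓ ∈ M.U) (h : (M.after (σ ++ [.lab ℓ])).Nonempty) :
    .lab ℓ ∈ M.outSet (M.after σ) := by
  obtain ⟨q', hq'⟩ := h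
  obtain ⟨r, r', hr, hstep, -⟩ := W_append_singleton_iff.1 hq'
  exact mem_outSet.2 ⟨r, hr, hU, r', hstep⟩

theorem mem_offered_of_nonempty (hx : ELabel.inL M.L x) (hne : (M.after (σ ++ [x])).Nonempty)
    (hin : ∀ ℓ ∈ M.I, x = .lab ℓ → ℓ ∈ M.inSet (M.after σ)) : x ∈ M.offered (M.after σ) := by
  cases x with
  | delta => exact delta_mem_offered.2 (delta_mem_outSet_of_nonempty hne)
  | lab ℓ =>
    rcases hx with hI | hU
    · exact lab_mem_offered.2 (.inr (hin ℓ hI rfl))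
    · exact lab_mem_offered.2 (.inl (lab_mem_outSet_of_nonempty hU hne))

/-- The move of a component `M` of a parallel composition when the composition performs `x`:
`M` takes part if `x ∈ L^δ`, and stays where it is otherwise. -/
def LocalStep (M : LTS Q Lab) (q : Q) (x : ELabel Lab) (q' : Q) : Prop :=
  (ELabel.inL M.L x ∧ M.VStep q x q') ∨ (¬ ELabel.inL M.L x ∧ q' = q)

theorem W_projD_append_singleton_iff :
    M.W q (projD (σ ++ [x]) M.L) q₁ ↔
      ∃ r r', M.W q (projD σ M.L) r ∧ M.LocalStep r x r' ∧ M.Eps r' q₁ := by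
  by_cases hx : ELabel.inL M.L x
  · simp [projD_append_singleton_of_inL hx, W_append_singleton_iff, LocalStep, hx]
  · simp only [projD_append_singleton_of_not_inL hx, LocalStep, hx, false_and, false_or,
      not_false_eq_true, true_and]
    constructor
    · intro h
      exact ⟨q₁, q₁, h, rfl, .refl⟩
    · rintro ⟨r, _, h, rfl, hε⟩
      exact h.trans_eps hε

theorem exists_T_of_W_of_no_tau (hτ : ∀ q', ¬ M.T q none q') (hW : M.W q [.lab ℓ] q₁) :
    ∃ q', M.T q (some ℓ) q' := by
  obtain ⟨r, r', hε, hstep, -⟩ := W_singleton_iff.1 hW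
  rcases hε.cases_head with rfl | ⟨c, hc, -⟩
  · exact ⟨r', hstep⟩
  · exact absurd hc (hτ c)

theorem exists_W_projD_singleton_iff :
    (∃ q', M.W q (projD [x] M.L) q') ↔ (ELabel.inL M.L x → ∃ q', M.W q [x] q') := by
  by_cases hx : ELabel.inL M.L x
  · simp [projD, hx]
  · simp only [projD, hx, decide_false, List.filter_singleton, cond_false, W_nil_iff,
      false_imp_iff, iff_true]
    exact ⟨q, .refl⟩

theorem after_projD_append_singleton_of_inL (hx : ELabel.inL M.L x) :
    M.after (projD (σ ++ [x]) M.L) = M.afterSet (M.after (projD σ M.L)) [x] := by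
  rw [projD_append_singleton_of_inL hx, after_append_singleton]

theorem after_projD_append_singleton_of_not_inL (hx : ¬ ELabel.inL M.L x) :
    M.after (projD (σ ++ [x]) M.L) = M.after (projD σ M.L) := by
  rw [projD_append_singleton_of_not_inL hx]

theorem after_projD_append_singleton_nonempty (hne : (M.after (projD σ M.L)).Nonempty)
    (h : ELabel.inL M.L x → x ∈ M.offered (M.after (projD σ M.L))) :
    (M.after (projD (σ ++ [x]) M.L)).Nonempty := by
  by_cases hx : ELabel.inL M.L x
  · rw [projD_append_singleton_of_inL hx]
    exact after_append_singleton_nonempty_of_mem_offered hne (h hx)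
  · rwa [after_projD_append_singleton_of_not_inL hx]

/-- The LTS `M` with its states renamed along `f`. -/
def mapEquiv (f : Q ≃ Q') (M : LTS Q Lab) : LTS Q' Lab where
  I := M.I
  U := M.U
  T q a q' := M.T (f.symm q) a (f.symm q')
  q0 := f M.q0

variable (f : Q ≃ Q')

theorem mapEquiv_symm_mapEquiv : (M.mapEquiv f).mapEquiv f.symm = M := by
  simp [mapEquiv]

theorem Quiescent.mapEquiv (h : M.Quiescent q) : (M.mapEquiv f).Quiescent (f q) := by
  simpa [Quiescent, LTS.mapEquiv, f.symm.surjective.forall] using h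

theorem W.mapEquiv (h : M.W q σ q₁) : (M.mapEquiv f).W (f q) σ (f q₁) := by
  have eps_map {p p' : Q} (hε : M.Eps p p') : (M.mapEquiv f).Eps (f p) (f p') :=
    hε.lift f fun a b hab => by simpa [LTS.mapEquiv, Function.onFun] using hab
  induction h with
  | nil hε => exact .nil (eps_map hε)
  | @snoc _ r _ _ x _ hstep hε ih =>
    refine .snoc ih (q2 := f r) ?_ (eps_map hε)
    cases x with
    | lab ℓ => simpa [LTS.mapEquiv, VStep] using hstep
    | delta => exact ⟨congrArg f hstep.1, hstep.2.mapEquiv f⟩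

theorem W_mapEquiv_iff {p p' : Q'} :
    (M.mapEquiv f).W p σ p' ↔ M.W (f.symm p) σ (f.symm p') := by
  constructor
  · intro h
    simpa only [mapEquiv_symm_mapEquiv] using h.mapEquiv f.symm
  · intro h
    simpa only [Equiv.apply_symm_apply] using h.mapEquiv f

theorem Utraces_mapEquiv : (M.mapEquiv f).Utraces = M.Utraces := by
  ext σ
  have q0_eq : f.symm (M.mapEquiv f).q0 = M.q0 := f.symm_apply_apply _
  simp only [Utraces, W_mapEquiv_iff, Set.mem_ofPred_eq, q0_eq, f.symm.surjective.exists,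
    f.symm.surjective.forall]
  rfl

end LTS

section Par

open LTS

variable {Qs Qe Lab : Type} {s : LTS Qs Lab} {e : LTS Qe Lab} {p p' : Qs × Qe}
  {σ : List (ELabel Lab)} {x : ELabel Lab} {ℓ : Lab} {R : Set (Set Qs × Set Qe)}

theorem inL_par_iff : ELabel.inL (par s e).L x ↔ ELabel.inL s.L x ∨ ELabel.inL e.L x := by
  cases x with
  | delta => simp [ELabel.inL]
  | lab ℓ =>
    simp only [ELabel.inL, LTS.L, par, Set.mem_union, Set.mem_sdiff]
    tauto

theorem mapEquiv_prodComm_par (s : LTS Qs Lab) (e : LTS Qe Lab) :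
    (par s e).mapEquiv (Equiv.prodComm Qs Qe) = par e s := by
  simp only [mapEquiv, par, LTS.mk.injEq, Set.union_comm, true_and, Equiv.prodComm_apply,
    Prod.swap_prod_mk, and_true]
  funext p a p'
  cases a <;> simp <;> tauto

theorem Eps_par_iff : (par s e).Eps p p' ↔ s.Eps p.1 p'.1 ∧ e.Eps p.2 p'.2 := by
  constructor
  · intro h
    induction h with
    | refl => exact ⟨.refl, .refl⟩
    | tail _ hτ ih =>
      rcases hτ with ⟨hs, he⟩ | ⟨he, hs⟩
      · exact ⟨ih.1.tail hs, he ▸ ih.2⟩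
      · exact ⟨hs ▸ ih.1, ih.2.tail he⟩
  · rintro ⟨hs, he⟩
    have left_moves : (par s e).Eps (p.1, p.2) (p'.1, p.2) :=
      hs.lift (·, p.2) fun _ _ hτ => .inl ⟨hτ, rfl⟩
    have right_moves : (par s e).Eps (p'.1, p.2) (p'.1, p'.2) :=
      he.lift (p'.1, ·) fun _ _ hτ => .inr ⟨hτ, rfl⟩
    exact left_moves.trans right_moves

/-- `out(q_e) ∩ I_s ⊆ in(q_s)`: the condition of `Accepts` at a single pair of states. -/
def AcceptsAt (s : LTS Qs Lab) (e : LTS Qe Lab) (qs : Qs) (qe : Qe) : Prop :=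
  ∀ ℓ, .lab ℓ ∈ e.outq qe → ℓ ∈ s.I → ℓ ∈ s.inq qs

/-- The condition of `MutuallyAccepts` at a single state of `s ∥ e`. -/
def MutuallyAcceptsAt (s : LTS Qs Lab) (e : LTS Qe Lab) (p : Qs × Qe) : Prop :=
  AcceptsAt s e p.1 p.2 ∧ AcceptsAt e s p.2 p.1

theorem accepts_iff :
    Accepts s e ↔ ∀ σ ∈ (par s e).Utraces, ∀ p ∈ (par s e).after σ, AcceptsAt s e p.1 p.2 :=
  ⟨fun h σ hσ p hp => h σ hσ p.1 p.2 hp, fun h σ hσ qs qe hq => h σ hσ (qs, qe) hq⟩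

theorem accepts_swap_iff :
    Accepts e s ↔ ∀ σ ∈ (par s e).Utraces, ∀ p ∈ (par s e).after σ, AcceptsAt e s p.2 p.1 := by
  rw [accepts_iff, ← mapEquiv_prodComm_par s e, Utraces_mapEquiv]
  simp only [after, Set.mem_ofPred_eq, W_mapEquiv_iff]
  exact forall₂_congr fun σ _ => (Equiv.prodComm Qe Qs).forall_congr fun p => Iff.rfl

theorem mutuallyAccepts_iff : MutuallyAccepts s e ↔
    ∀ σ ∈ (par s e).Utraces, ∀ p ∈ (par s e).after σ, MutuallyAcceptsAt s e p := by
  rw [MutuallyAccepts, accepts_iff, accepts_swap_iff]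
  simp only [MutuallyAcceptsAt, forall_and]

theorem Composable.symm (h : Composable s e) : Composable e s :=
  (Set.inter_comm _ _).trans h

theorem Composable.notMem_of_mem (h : Composable s e) (hs : ℓ ∈ s.U) : ℓ ∉ e.U :=
  fun he => Set.notMem_empty ℓ (h ▸ ⟨hs, he⟩)

theorem LTS.Quiescent.fst_of_par (h : (par s e).Quiescent p) (hcomp : Composable s e)
    (hacc : AcceptsAt e s p.2 p.1) : s.Quiescent p.1 := by
  have no_tau_e : ∀ q', ¬ e.T p.2 none q' := fun q' hτ => h.2 (p.1, q') (.inr ⟨hτ, rfl⟩)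
  refine ⟨fun ℓ hU q' hq' => ?_, fun q' hτ => h.2 (q', p.2) (.inl ⟨hτ, rfl⟩)⟩
  by_cases hI : ℓ ∈ e.I
  · obtain ⟨-, r, hr⟩ := hacc ℓ ⟨hU, q', hq'⟩ hI
    obtain ⟨r', hr'⟩ := exists_T_of_W_of_no_tau no_tau_e hr
    exact h.1 ℓ (.inl hU) (q', r') (.inr (.inr ⟨.inr hU, .inl hI, hq', hr'⟩))
  · have hL : ℓ ∉ e.L := fun hL => hL.elim hI (hcomp.notMem_of_mem hU)
    exact h.1 ℓ (.inl hU) (q', p.2) (.inl ⟨.inr hU, hL, hq', rfl⟩)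

theorem LTS.Quiescent.par (hs : s.Quiescent p.1) (he : e.Quiescent p.2) :
    (par s e).Quiescent p := by
  constructor
  · rintro ℓ (hU | hU) p' (⟨-, heL, hT, -⟩ | ⟨-, hsL, hT, -⟩ | ⟨-, -, hTs, hTe⟩)
    · exact hs.1 ℓ hU _ hT
    · exact hsL (.inr hU)
    · exact hs.1 ℓ hU _ hTs
    · exact heL (.inr hU)
    · exact he.1 ℓ hU _ hT
    · exact he.1 ℓ hU _ hTe
  · rintro p' (⟨hτ, -⟩ | ⟨hτ, -⟩)
    · exact hs.2 _ hτ
    · exact he.2 _ hτ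

theorem quiescent_par_iff (hcomp : Composable s e) (hacc : MutuallyAcceptsAt s e p) :
    (par s e).Quiescent p ↔ s.Quiescent p.1 ∧ e.Quiescent p.2 := by
  refine ⟨fun h => ⟨h.fst_of_par hcomp hacc.2, ?_⟩, fun h => h.1.par h.2⟩
  have hswap : (par e s).Quiescent p.swap :=
    mapEquiv_prodComm_par s e ▸ h.mapEquiv (Equiv.prodComm Qs Qe)
  exact hswap.fst_of_par hcomp.symm hacc.1

theorem VStep_par_iff (hcomp : Composable s e) (hx : ELabel.inL (par s e).L x)
    (hacc : x = .delta → MutuallyAcceptsAt s e p) :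
    (par s e).VStep p x p' ↔ s.LocalStep p.1 x p'.1 ∧ e.LocalStep p.2 x p'.2 := by
  cases x with
  | delta =>
    simp only [VStep, LocalStep, ELabel.inL, quiescent_par_iff hcomp (hacc rfl), Prod.ext_iff]
    tauto
  | lab ℓ =>
    rw [inL_par_iff] at hx
    simp only [VStep, LocalStep, ELabel.inL, par] at hx ⊢
    tauto

/-- The `σ`-transitions of `s ∥ e` from `p` are the pairs of transitions of `s` and `e` along the
projections of `σ`. -/
def Factors (s : LTS Qs Lab) (e : LTS Qe Lab) (p : Qs × Qe) (σ : List (ELabel Lab)) : Prop :=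
  ∀ p', (par s e).W p σ p' ↔ s.W p.1 (projD σ s.L) p'.1 ∧ e.W p.2 (projD σ e.L) p'.2

theorem Factors.nil : Factors s e p [] := by
  intro p'
  simp [projD, W_nil_iff, Eps_par_iff]

theorem Factors.append_singleton (h : Factors s e p σ) (hcomp : Composable s e)
    (hx : ELabel.inL (par s e).L x)
    (hacc : x = .delta → ∀ p', (par s e).W p σ p' → MutuallyAcceptsAt s e p') :
    Factors s e p (σ ++ [x]) := by
  intro p'
  simp only [W_append_singleton_iff, W_projD_append_singleton_iff]
  constructor
  · rintro ⟨r, r', hσ, hstep, hε⟩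
    rw [VStep_par_iff hcomp hx fun hδ => hacc hδ r hσ] at hstep
    rw [h] at hσ
    rw [Eps_par_iff] at hε
    exact ⟨⟨r.1, r'.1, hσ.1, hstep.1, hε.1⟩, ⟨r.2, r'.2, hσ.2, hstep.2, hε.2⟩⟩
  · rintro ⟨⟨rs, rs', hσs, hstep_s, hεs⟩, ⟨re, re', hσe, hstep_e, hεe⟩⟩
    have hσ : (par s e).W p σ (rs, re) := (h _).2 ⟨hσs, hσe⟩
    exact ⟨(rs, re), (rs', re'), hσ,
      (VStep_par_iff hcomp hx fun hδ => hacc hδ _ hσ).2 ⟨hstep_s, hstep_e⟩,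
      Eps_par_iff.2 ⟨hεs, hεe⟩⟩

theorem Factors.singleton_lab (hcomp : Composable s e) (hℓ : ℓ ∈ (par s e).L) :
    Factors s e p [.lab ℓ] :=
  Factors.nil.append_singleton hcomp hℓ nofun

theorem Factors.after_eq_prod (h : Factors s e (par s e).q0 σ) :
    (par s e).after σ = s.after (projD σ s.L) ×ˢ e.after (projD σ e.L) :=
  Set.ext h

theorem Factors.symm (h : Factors s e p σ) : Factors e s p.swap σ := by
  intro p'
  rw [← mapEquiv_prodComm_par s e, W_mapEquiv_iff, and_comm]
  exact h p'.swap

theorem Utraces_par_comm : (par e s).Utraces = (par s e).Utraces := by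
  rw [← mapEquiv_prodComm_par s e, Utraces_mapEquiv]

theorem disjoint_par (hs : Disjoint s.I s.U) (he : Disjoint e.I e.U) :
    Disjoint (par s e).I (par s e).U := by
  rw [Set.disjoint_left] at hs he ⊢
  rintro ℓ (⟨hI, hU⟩ | ⟨hI, hU⟩) (hsU | heU)
  exacts [hs hI hsU, hU heU, hU hsU, he hI heU]

theorem exists_W_par_lab_iff (hcomp : Composable s e) (hℓ : ℓ ∈ (par s e).L) :
    (∃ p', (par s e).W p [.lab ℓ] p') ↔
      (ℓ ∈ s.L → ∃ q, s.W p.1 [.lab ℓ] q) ∧ (ℓ ∈ e.L → ∃ q, e.W p.2 [.lab ℓ] q) := by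
  calc (∃ p', (par s e).W p [.lab ℓ] p')
      ↔ (∃ q, s.W p.1 (projD [.lab ℓ] s.L) q) ∧ ∃ q, e.W p.2 (projD [.lab ℓ] e.L) q := by
        simp only [(Factors.singleton_lab hcomp hℓ) _, Prod.exists, exists_and_left,
          exists_and_right]
    _ ↔ _ := and_congr exists_W_projD_singleton_iff exists_W_projD_singleton_iff

theorem mem_inSet_of_acceptsAt {X : Set Qs} {Y : Set Qe}
    (hacc : ∀ qs ∈ X, ∀ qe ∈ Y, AcceptsAt s e qs qe) (hout : .lab ℓ ∈ e.outSet Y)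
    (hI : ℓ ∈ s.I) : ℓ ∈ s.inSet X := by
  obtain ⟨qe, hqe, hℓ⟩ := mem_outSet.1 hout
  exact mem_inSet.2 fun qs hqs => hacc qs hqs qe hqe ℓ hℓ hI

/-- The pair `(s after σ↾L_s, e after σ↾L_e)`. -/
noncomputable def projAfter (s : LTS Qs Lab) (e : LTS Qe Lab) (σ : List (ELabel Lab)) :
    Set Qs × Set Qe :=
  (s.after (projD σ s.L), e.after (projD σ e.L))

/-- `x` is a label of `s ∥ e` or `δ`, and each component that takes part in `x` offers it from its
set of states. -/
def JointlyOffered (s : LTS Qs Lab) (e : LTS Qe Lab) (X : Set Qs × Set Qe) (x : ELabel Lab) :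
    Prop :=
  ELabel.inL (par s e).L x ∧
    (ELabel.inL s.L x → x ∈ s.offered X.1) ∧ (ELabel.inL e.L x → x ∈ e.offered X.2)

-- An input of `s` is either an input of `s ∥ e`, which a utrace only performs if all states enable
-- it, or an output of `e`, which `s` accepts.
theorem mem_inSet_of_append_mem_Utraces (hcomp : Composable s e)
    (hσ : Factors s e (par s e).q0 σ) (hσℓ : Factors s e (par s e).q0 (σ ++ [.lab ℓ]))
    (hacc : ∀ qs ∈ s.after (projD σ s.L), ∀ qe ∈ e.after (projD σ e.L), AcceptsAt s e qs qe)
    (h : σ ++ [.lab ℓ] ∈ (par s e).Utraces) (hI : ℓ ∈ s.I) :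
    ℓ ∈ s.inSet (s.after (projD σ s.L)) := by
  obtain ⟨⟨-, hne, -⟩, hL, hneℓ, hin⟩ := append_singleton_mem_Utraces_iff.1 h
  by_cases hU : ℓ ∈ e.U
  · have heL : ELabel.inL e.L (.lab ℓ) := .inr hU
    rw [hσℓ.after_eq_prod, projD_append_singleton_of_inL heL] at hneℓ
    exact mem_inSet_of_acceptsAt hacc (lab_mem_outSet_of_nonempty hU hneℓ.snd) hI
  · obtain ⟨p₀, hp₀⟩ := hne
    refine mem_inSet.2 fun qs hqs => ⟨hI, ?_⟩
    have hp : (qs, p₀.2) ∈ (par s e).after σ := (hσ _).2 ⟨hqs, ((hσ _).1 hp₀).2⟩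
    exact ((exists_W_par_lab_iff hcomp hL).1 (hin ℓ (.inl ⟨hI, hU⟩) rfl _ hp)).1 (.inl hI)

theorem mem_offered_of_append_mem_Utraces (hcomp : Composable s e)
    (hσ : Factors s e (par s e).q0 σ) (hσx : Factors s e (par s e).q0 (σ ++ [x]))
    (hacc : ∀ qs ∈ s.after (projD σ s.L), ∀ qe ∈ e.after (projD σ e.L), AcceptsAt s e qs qe)
    (h : σ ++ [x] ∈ (par s e).Utraces) (hx : ELabel.inL s.L x) :
    x ∈ s.offered (s.after (projD σ s.L)) := by
  have hne : ((par s e).after (σ ++ [x])).Nonempty := h.2.1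
  rw [hσx.after_eq_prod, projD_append_singleton_of_inL hx] at hne
  refine mem_offered_of_nonempty hx hne.fst fun ℓ hI hxℓ => ?_
  subst hxℓ
  exact mem_inSet_of_append_mem_Utraces hcomp hσ hσx hacc h hI

theorem jointlyOffered_of_append_mem_Utraces (hcomp : Composable s e)
    (hσ : Factors s e (par s e).q0 σ) (hσx : Factors s e (par s e).q0 (σ ++ [x]))
    (hacc : ∀ p ∈ (par s e).after σ, MutuallyAcceptsAt s e p)
    (h : σ ++ [x] ∈ (par s e).Utraces) : JointlyOffered s e (projAfter s e σ) x := by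
  rw [hσ.after_eq_prod] at hacc
  refine ⟨(append_singleton_mem_Utraces_iff.1 h).2.1, ?_, ?_⟩
  · exact mem_offered_of_append_mem_Utraces hcomp hσ hσx
      (fun qs hqs qe hqe => (hacc (qs, qe) ⟨hqs, hqe⟩).1) h
  · exact mem_offered_of_append_mem_Utraces hcomp.symm hσ.symm hσx.symm
      (fun qe hqe qs hqs => (hacc (qs, qe) ⟨hqs, hqe⟩).2) (Utraces_par_comm ▸ h)

theorem JointlyOffered.append_mem_Utraces (hs : Disjoint s.I s.U) (he : Disjoint e.I e.U)
    (hcomp : Composable s e) (hσ : Factors s e (par s e).q0 σ)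
    (hσx : Factors s e (par s e).q0 (σ ++ [x])) (hU : σ ∈ (par s e).Utraces)
    (h : JointlyOffered s e (projAfter s e σ) x) : σ ++ [x] ∈ (par s e).Utraces := by
  obtain ⟨hL, hxs, hxe⟩ := h
  refine append_singleton_mem_Utraces_iff.2 ⟨hU, hL, ?_, ?_⟩
  · have hne : ((par s e).after σ).Nonempty := hU.2.1
    rw [hσ.after_eq_prod] at hne
    rw [hσx.after_eq_prod]
    exact (after_projD_append_singleton_nonempty hne.fst hxs).prod
      (after_projD_append_singleton_nonempty hne.snd hxe)
  · rintro ℓ hI rfl p hp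
    have hout : ℓ ∉ s.U ∪ e.U := Set.disjoint_left.1 (disjoint_par hs he) hI
    obtain ⟨hp₁, hp₂⟩ := (hσ p).1 hp
    refine (exists_W_par_lab_iff hcomp hL).2 ⟨fun hℓ => ?_, fun hℓ => ?_⟩
    · have hin := (lab_mem_offered.1 (hxs hℓ)).resolve_left
        fun h => hout (.inl (mem_U_of_mem_outSet h))
      exact (mem_inSet.1 hin p.1 hp₁).2
    · have hin := (lab_mem_offered.1 (hxe hℓ)).resolve_left
        fun h => hout (.inr (mem_U_of_mem_outSet h))
      exact (mem_inSet.1 hin p.2 hp₂).2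

theorem IsEcosim.mutuallyAcceptsAt (hR : IsEcosim s e R) {X : Set Qs} {Y : Set Qe}
    (h : (X, Y) ∈ R) (hp : p ∈ X ×ˢ Y) : MutuallyAcceptsAt s e p := by
  obtain ⟨outE, outS, -⟩ := hR.2 X Y h
  exact
    ⟨fun ℓ hℓ hI => mem_inSet.1 (outE ℓ (mem_outSet.2 ⟨p.2, hp.2, hℓ⟩) hI).1 p.1 hp.1,
      fun ℓ hℓ hI => mem_inSet.1 (outS ℓ (mem_outSet.2 ⟨p.1, hp.1, hℓ⟩) hI).1 p.2 hp.2⟩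

theorem IsEcosim.projAfter_append_mem (hR : IsEcosim s e R) (hcomp : Composable s e)
    (h : projAfter s e σ ∈ R) (hx : JointlyOffered s e (projAfter s e σ) x) :
    projAfter s e (σ ++ [x]) ∈ R := by
  obtain ⟨outE, outS, onlyE, onlyS, inBoth, quiet⟩ := hR.2 _ _ h
  obtain ⟨hL, hxs, hxe⟩ := hx
  rw [inL_par_iff] at hL
  by_cases hsL : ELabel.inL s.L x <;> by_cases heL : ELabel.inL e.L x <;>
    simp only [projAfter, after_projD_append_singleton_of_inL,
      after_projD_append_singleton_of_not_inL, hsL, heL, not_false_eq_true]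
  · specialize hxs hsL
    specialize hxe heL
    cases x with
    | delta => exact quiet (delta_mem_offered.1 hxs) (delta_mem_offered.1 hxe)
    | lab ℓ =>
      rcases lab_mem_offered.1 hxs with hs | hs
      · have heI := heL.resolve_right (hcomp.notMem_of_mem (mem_U_of_mem_outSet hs))
        exact (outS ℓ hs heI).2
      rcases lab_mem_offered.1 hxe with he | he
      · have hsI := hsL.resolve_right (hcomp.symm.notMem_of_mem (mem_U_of_mem_outSet he))
        exact (outE ℓ he hsI).2
      · exact inBoth ℓ hs he
  · cases x with
    | delta => exact absurd trivial heL
    | lab ℓ => exact onlyS ℓ (lab_mem_offered.1 (hxs hsL)) heL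
  · cases x with
    | delta => exact absurd trivial hsL
    | lab ℓ => exact onlyE ℓ (lab_mem_offered.1 (hxe heL)) hsL
  · exact absurd hL (not_or.2 ⟨hsL, heL⟩)

theorem IsEcosim.factors_and_projAfter_mem (hR : IsEcosim s e R) (hcomp : Composable s e)
    (hσ : σ ∈ (par s e).Utraces) : Factors s e (par s e).q0 σ ∧ projAfter s e σ ∈ R := by
  induction σ using List.reverseRecOn with
  | nil => exact ⟨.nil, hR.1⟩
  | append_singleton σ x ih =>
    obtain ⟨hpre, hL, -⟩ := append_singleton_mem_Utraces_iff.1 hσ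
    obtain ⟨hF, hmem⟩ := ih hpre
    have hacc : ∀ p ∈ (par s e).after σ, MutuallyAcceptsAt s e p := fun p hp =>
      hR.mutuallyAcceptsAt hmem (hF.after_eq_prod ▸ hp)
    have hF' := hF.append_singleton hcomp hL fun _ => hacc
    exact ⟨hF', hR.projAfter_append_mem hcomp hmem
      (jointlyOffered_of_append_mem_Utraces hcomp hF hF' hacc hσ)⟩

theorem IsEcosim.mutuallyAccepts (hR : IsEcosim s e R) (hcomp : Composable s e) :
    MutuallyAccepts s e := by
  refine mutuallyAccepts_iff.2 fun σ hσ p hp => ?_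
  obtain ⟨hF, hmem⟩ := hR.factors_and_projAfter_mem hcomp hσ
  exact hR.mutuallyAcceptsAt hmem (hF.after_eq_prod ▸ hp)

theorem MutuallyAccepts.factors (h : MutuallyAccepts s e) (hcomp : Composable s e)
    (hσ : σ ∈ (par s e).Utraces) : Factors s e (par s e).q0 σ := by
  induction σ using List.reverseRecOn with
  | nil => exact .nil
  | append_singleton σ x ih =>
    obtain ⟨hpre, hL, -⟩ := append_singleton_mem_Utraces_iff.1 hσ
    exact (ih hpre).append_singleton hcomp hL fun _ => mutuallyAccepts_iff.1 h σ hpre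

/-- The pairs of state sets that `s` and `e` reach along the utraces of `s ∥ e`; the canonical
candidate for an ecosim. -/
def utraceRel (s : LTS Qs Lab) (e : LTS Qe Lab) : Set (Set Qs × Set Qe) :=
  projAfter s e '' (par s e).Utraces

section utraceRel

variable {X : Set Qs} {Y : Set Qe}

theorem MutuallyAccepts.nonempty_of_mem_utraceRel (h : MutuallyAccepts s e)
    (hcomp : Composable s e) (hXY : (X, Y) ∈ utraceRel s e) : X.Nonempty ∧ Y.Nonempty := by
  obtain ⟨σ, hσ, hσXY⟩ := hXY
  obtain ⟨rfl, rfl⟩ := Prod.mk.inj hσXY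
  rw [← Set.prod_nonempty_iff, ← (h.factors hcomp hσ).after_eq_prod]
  exact hσ.2.1

theorem MutuallyAccepts.mutuallyAcceptsAt_of_mem_utraceRel (h : MutuallyAccepts s e)
    (hcomp : Composable s e) (hXY : (X, Y) ∈ utraceRel s e) (hp : p ∈ X ×ˢ Y) :
    MutuallyAcceptsAt s e p := by
  obtain ⟨σ, hσ, hσXY⟩ := hXY
  obtain ⟨rfl, rfl⟩ := Prod.mk.inj hσXY
  exact mutuallyAccepts_iff.1 h σ hσ p ((h.factors hcomp hσ).after_eq_prod ▸ hp)

theorem MutuallyAccepts.projAfter_append_mem_utraceRel (h : MutuallyAccepts s e)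
    (hs : Disjoint s.I s.U) (he : Disjoint e.I e.U) (hcomp : Composable s e)
    (hσ : σ ∈ (par s e).Utraces) (hx : JointlyOffered s e (projAfter s e σ) x) :
    projAfter s e (σ ++ [x]) ∈ utraceRel s e := by
  have hF := h.factors hcomp hσ
  have hF' := hF.append_singleton hcomp hx.1 fun _ => mutuallyAccepts_iff.1 h σ hσ
  exact ⟨_, hx.append_mem_Utraces hs he hcomp hF hF' hσ, rfl⟩

theorem MutuallyAccepts.afterSet_both_mem_utraceRel (h : MutuallyAccepts s e)
    (hs : Disjoint s.I s.U) (he : Disjoint e.I e.U) (hcomp : Composable s e)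
    (hXY : (X, Y) ∈ utraceRel s e) (hxs : x ∈ s.offered X) (hxe : x ∈ e.offered Y) :
    (s.afterSet X [x], e.afterSet Y [x]) ∈ utraceRel s e := by
  obtain ⟨hX, hY⟩ := h.nonempty_of_mem_utraceRel hcomp hXY
  have hsL := inL_of_mem_offered hX hxs
  have heL := inL_of_mem_offered hY hxe
  obtain ⟨σ, hσ, hσXY⟩ := hXY
  obtain ⟨rfl, rfl⟩ := Prod.mk.inj hσXY
  rw [← after_projD_append_singleton_of_inL hsL, ← after_projD_append_singleton_of_inL heL]
  exact h.projAfter_append_mem_utraceRel hs he hcomp hσ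
    ⟨inL_par_iff.2 (.inl hsL), fun _ => hxs, fun _ => hxe⟩

theorem MutuallyAccepts.afterSet_left_mem_utraceRel (h : MutuallyAccepts s e)
    (hs : Disjoint s.I s.U) (he : Disjoint e.I e.U) (hcomp : Composable s e)
    (hXY : (X, Y) ∈ utraceRel s e) (hxs : x ∈ s.offered X) (hxe : ¬ ELabel.inL e.L x) :
    (s.afterSet X [x], Y) ∈ utraceRel s e := by
  have hsL := inL_of_mem_offered (h.nonempty_of_mem_utraceRel hcomp hXY).1 hxs
  obtain ⟨σ, hσ, hσXY⟩ := hXY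
  obtain ⟨rfl, rfl⟩ := Prod.mk.inj hσXY
  rw [← after_projD_append_singleton_of_inL hsL, ← after_projD_append_singleton_of_not_inL hxe]
  exact h.projAfter_append_mem_utraceRel hs he hcomp hσ
    ⟨inL_par_iff.2 (.inl hsL), fun _ => hxs, fun heL => absurd heL hxe⟩

theorem MutuallyAccepts.afterSet_right_mem_utraceRel (h : MutuallyAccepts s e)
    (hs : Disjoint s.I s.U) (he : Disjoint e.I e.U) (hcomp : Composable s e)
    (hXY : (X, Y) ∈ utraceRel s e) (hxs : ¬ ELabel.inL s.L x) (hxe : x ∈ e.offered Y) :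
    (X, e.afterSet Y [x]) ∈ utraceRel s e := by
  have heL := inL_of_mem_offered (h.nonempty_of_mem_utraceRel hcomp hXY).2 hxe
  obtain ⟨σ, hσ, hσXY⟩ := hXY
  obtain ⟨rfl, rfl⟩ := Prod.mk.inj hσXY
  rw [← after_projD_append_singleton_of_inL heL, ← after_projD_append_singleton_of_not_inL hxs]
  exact h.projAfter_append_mem_utraceRel hs he hcomp hσ
    ⟨inL_par_iff.2 (.inr heL), fun hsL => absurd hsL hxs, fun _ => hxe⟩

end utraceRel

theorem MutuallyAccepts.isEcosim_utraceRel (h : MutuallyAccepts s e) (hs : Disjoint s.I s.U)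
    (he : Disjoint e.I e.U) (hcomp : Composable s e) : IsEcosim s e (utraceRel s e) := by
  refine ⟨⟨[], nil_mem_Utraces, rfl⟩, fun X Y hXY => ?_⟩
  have hacc : ∀ p ∈ X ×ˢ Y, MutuallyAcceptsAt s e p := fun _ =>
    h.mutuallyAcceptsAt_of_mem_utraceRel hcomp hXY
  have both {x : ELabel Lab} : x ∈ s.offered X → x ∈ e.offered Y →
      (s.afterSet X [x], e.afterSet Y [x]) ∈ utraceRel s e :=
    h.afterSet_both_mem_utraceRel hs he hcomp hXY
  refine ⟨fun ℓ hout hI => ?_, fun ℓ hout hI => ?_, fun ℓ hℓ hL => ?_, fun ℓ hℓ hL => ?_,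
    fun ℓ hins hine => ?_, fun hδs hδe => ?_⟩
  · have hin := mem_inSet_of_acceptsAt
      (fun qs hqs qe hqe => (hacc (qs, qe) ⟨hqs, hqe⟩).1) hout hI
    exact ⟨hin, both (lab_mem_offered.2 (.inr hin)) (lab_mem_offered.2 (.inl hout))⟩
  · have hin := mem_inSet_of_acceptsAt
      (fun qe hqe qs hqs => (hacc (qs, qe) ⟨hqs, hqe⟩).2) hout hI
    exact ⟨hin, both (lab_mem_offered.2 (.inl hout)) (lab_mem_offered.2 (.inr hin))⟩
  · exact h.afterSet_right_mem_utraceRel hs he hcomp hXY hL (lab_mem_offered.2 hℓ)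
  · exact h.afterSet_left_mem_utraceRel hs he hcomp hXY (lab_mem_offered.2 hℓ) hL
  · exact both (lab_mem_offered.2 (.inr hins)) (lab_mem_offered.2 (.inr hine))
  · exact both (delta_mem_offered.2 hδs) (delta_mem_offered.2 hδe)

theorem eco_iff_mutually_accepts_general (hs : Disjoint s.I s.U) (he : Disjoint e.I e.U)
    (hcomp : Composable s e) : Eco s e ↔ MutuallyAccepts s e :=
  ⟨fun ⟨_, hR⟩ => hR.mutuallyAccepts hcomp, fun h => ⟨_, h.isEcosim_utraceRel hs he hcomp⟩⟩

end Par

/-- for composable `s`, `e`, `s eco e` iff `s` mutually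
accepts `e`. -/
theorem eco_iff_mutually_accepts {Qs Qe Lab : Type}
    (s : LTS Qs Lab) (e : LTS Qe Lab)
    (hs : s.WellFormed) (he : e.WellFormed)
    (hcomp : Composable s e) :
    Eco s e ↔ MutuallyAccepts s e :=
  eco_iff_mutually_accepts_general hs.2.2.1 he.2.2.1 hcomp
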